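/- Let λ and ν be parameters with either λ > 0 and ν > 0, or ν = 0 and 0 < λ < 1. The Conway–Maxwell–Poisson distribution CMP(λ, ν) is infinitely divisible if and only if ν = 0 or ν = 1. -/

import Mathlib

open MeasureTheory

/-- The Conway–Maxwell–Poisson distribution `CMP(λ, ν)`, viewed as a measure on `ℝ`
supported on the nonnegative integers: `P(X = k) = (1/Z(λ,ν)) · λ^k/(k!)^ν`. -/
noncomputable def cmpMeasure (lam nu : ℝ) : Measure ℝ :=
  Measure.sum fun k : ℕ =>
    ENNReal.ofReal ((lam ^ k / (k.factorial : ℝ) ^ nu) /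
        ∑' j : ℕ, lam ^ j / (j.factorial : ℝ) ^ nu) • Measure.dirac (k : ℝ)

/-- The `n`-fold convolution of a measure on `ℝ`: the pushforward of the `n`-fold
product measure under summation of coordinates. -/
noncomputable def nfoldConv (n : ℕ) (μ : Measure ℝ) : Measure ℝ :=
  Measure.map (fun x : Fin n → ℝ => ∑ i, x i) (Measure.pi fun _ : Fin n => μ)

/-- A measure `μ` on `ℝ` is infinitely divisible if for every positive integer `n`
there is a probability measure whose `n`-fold convolution equals `μ`. -/
def InfinitelyDivisible (μ : Measure ℝ) : Prop :=
  ∀ n : ℕ, 0 < n → ∃ ν : Measure ℝ, IsProbabilityMeasure ν ∧ nfoldConv n ν = μ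

/-!
Encode a measure on `ℕ` by its generating function `P`, so that convolution becomes multiplication
of power series. When `P(0) ≠ 0`, any convolution root again lives on `ℕ`, so infinite divisibility
means that `P` has an `n`-th root with nonnegative coefficients for every `n ≥ 1`. This happens
exactly when `P' / P` has nonnegative coefficients: if `Qₙ ^ n = P` then `n Qₙ' = (P' / P) Qₙ`, and
`Qₙ → 1`; conversely, solving `Q' = (P' / (n P)) Q` recursively gives an `n`-th root.

For `CMP(λ, ν)`, nonnegativity of `P' / P` says that `(k + 1) ^ (1 - ν) = ∑ j, sⱼ (k)ⱼ ^ ν` for all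
`k` and some `sⱼ ≥ 0`, where `(k)ⱼ` is the falling factorial; here `s₀ = 1`. If `ν > 1`, the left
side is less than `1` at `k = 1`. If `0 < ν < 1`, then `(k)ⱼ ~ k ^ j` as `k → ∞` forces the leading
term to be `s_J = 1` with `J ν = 1 - ν`; but `(k + 1) ^ (1 - ν) - (k)_J ^ ν → 0`, which leaves no
room for `s₀ = 1`.
-/

open Filter PowerSeries Set Topology
open scoped ENNReal NNReal

section NFoldConv

variable (μ : Measure ℝ)

lemma nfoldConv_zero : nfoldConv 0 μ = Measure.dirac 0 := by
  rw [nfoldConv, Measure.pi_of_empty, Measure.map_dirac' (by fun_prop), Fin.sum_univ_zero]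

variable [SigmaFinite μ]

lemma nfoldConv_succ (n : ℕ) : nfoldConv (n + 1) μ = μ ∗ nfoldConv n μ := by
  have h_sum : Measurable fun x : Fin n → ℝ => ∑ i, x i := by fun_prop
  calc nfoldConv (n + 1) μ
      = (μ.prod (Measure.pi fun _ : Fin n => μ)).map
          ((fun p : ℝ × ℝ => p.1 + p.2) ∘ Prod.map id fun x => ∑ i, x i) := by
        rw [← (measurePreserving_piFinSuccAbove (fun _ : Fin (n + 1) => μ) 0).map_eq,
          Measure.map_map (by fun_prop) (by fun_prop)]
        exact congrArg (Measure.map · _) (funext Fin.sum_univ_succ)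
    _ = μ ∗ nfoldConv n μ := by
        rw [← Measure.map_map (by fun_prop) (by fun_prop),
          ← Measure.map_prod_map _ _ measurable_id h_sum, Measure.map_id, nfoldConv, Measure.conv]

lemma nfoldConv_univ (n : ℕ) : nfoldConv n μ univ = μ univ ^ n := by
  rw [nfoldConv, Measure.map_apply (by fun_prop) .univ, preimage_univ, Measure.pi_univ,
    Finset.prod_const, Finset.card_univ, Fintype.card_fin]

variable {μ} {n : ℕ}

lemma prod_le_nfoldConv {s : Fin n → Set ℝ} {t : Set ℝ}
    (h : ∀ x : Fin n → ℝ, (∀ i, x i ∈ s i) → ∑ i, x i ∈ t) :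
    ∏ i, μ (s i) ≤ nfoldConv n μ t := by
  rw [← Measure.pi_pi]
  exact (measure_mono fun x (hx : x ∈ univ.pi s) => h x fun i => hx i (mem_univ i)).trans
    (Measure.le_map_apply (by fun_prop) t)

lemma measure_Iio_zero_of_nfoldConv (hn : n ≠ 0) (h : nfoldConv n μ (Iio 0) = 0) :
    μ (Iio 0) = 0 := by
  have : NeZero n := ⟨hn⟩
  have h_le : ∏ _i : Fin n, μ (Iio 0) ≤ nfoldConv n μ (Iio 0) :=
    prod_le_nfoldConv fun x hx =>
      mem_Iio.mpr (Finset.sum_neg (fun i _ => hx i) Finset.univ_nonempty)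
  simpa [h, hn] using h_le

lemma nfoldConv_Iic_zero (hn : n ≠ 0) (h : μ (Iic 0) = 0) : nfoldConv n μ (Iic 0) = 0 := by
  have : NeZero n := ⟨hn⟩
  rw [nfoldConv, Measure.map_apply (by fun_prop) measurableSet_Iic]
  refine measure_mono_null (fun x hx => ?_)
    (measure_iUnion_null fun i => Measure.pi_eval_preimage_null (fun _ : Fin n => μ) (i := i) h)
  by_contra! h_pos
  simp only [mem_iUnion, mem_preimage, mem_Iic, not_exists, not_le] at h_pos
  exact (Finset.sum_pos (fun i _ => h_pos i) Finset.univ_nonempty).not_ge hx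

lemma measure_eq_zero_of_nfoldConv {s : Set ℝ} (hn : n ≠ 0) (h_zero : μ {0} ≠ 0)
    (h : nfoldConv n μ s = 0) : μ s = 0 := by
  obtain ⟨m, rfl⟩ := Nat.exists_eq_succ_of_ne_zero hn
  have h_le : ∏ i : Fin (m + 1), μ (Fin.cons (α := fun _ => Set ℝ) s (fun _ => {0}) i)
      ≤ nfoldConv (m + 1) μ s := by
    refine prod_le_nfoldConv fun x hx => ?_
    have h_tail : ∀ i : Fin m, x i.succ = 0 := fun i => hx i.succ
    simpa [Fin.sum_univ_succ, h_tail] using hx 0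
  simpa [Fin.prod_univ_succ, h, h_zero] using h_le

end NFoldConv

/-- The measure on `ℝ` with generating function `F`: the coefficient of `X ^ k` is the mass of the
point `k`. Coefficients in `ℝ≥0` make every power series the generating function of a measure. -/
noncomputable def pgfMeasure (F : ℝ≥0⟦X⟧) : Measure ℝ :=
  Measure.sum fun k : ℕ => ((coeff k F : ℝ≥0) : ℝ≥0∞) • Measure.dirac (k : ℝ)

section PgfMeasure

variable (F G : ℝ≥0⟦X⟧)

lemma lintegral_pgfMeasure (f : ℝ → ℝ≥0∞) :
    ∫⁻ x, f x ∂pgfMeasure F = ∑' k : ℕ, ((coeff k F : ℝ≥0) : ℝ≥0∞) * f k := by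
  simp only [pgfMeasure, lintegral_sum_measure, lintegral_smul_measure, lintegral_dirac,
    smul_eq_mul]

lemma pgfMeasure_singleton (k : ℕ) : pgfMeasure F {(k : ℝ)} = coeff k F := by
  rw [pgfMeasure, Measure.sum_apply _ (measurableSet_singleton _), tsum_eq_single k]
  · simp
  · intro j hj
    simp [hj]

lemma pgfMeasure_injective : Function.Injective pgfMeasure := by
  intro F G h
  ext k
  have h_mass := congrArg (fun μ => μ {(k : ℝ)}) h
  simp only [pgfMeasure_singleton] at h_mass
  exact_mod_cast h_mass

lemma pgfMeasure_eq_zero_of_forall_natCast_notMem {s : Set ℝ} (hs : MeasurableSet s)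
    (h : ∀ k : ℕ, (k : ℝ) ∉ s) : pgfMeasure F s = 0 := by
  simp [pgfMeasure, Measure.sum_apply _ hs, Measure.dirac_apply' _ hs, h]

instance : SigmaFinite (pgfMeasure F) := by
  refine Measure.sigmaFinite_of_countable
    (S := insert (range ((↑) : ℕ → ℝ))ᶜ (range fun k : ℕ => {(k : ℝ)})) ?_ ?_ ?_
  · exact (countable_range _).insert _
  · rintro s (rfl | ⟨k, rfl⟩)
    · rw [pgfMeasure_eq_zero_of_forall_natCast_notMem F (countable_range _).measurableSet.compl
        fun k hk => hk ⟨k, rfl⟩]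
      exact ENNReal.zero_lt_top
    · rw [pgfMeasure_singleton]
      exact ENNReal.coe_lt_top
  · rw [sUnion_insert, sUnion_range, iUnion_singleton_eq_range, compl_union_self]

lemma pgfMeasure_one : pgfMeasure 1 = Measure.dirac 0 := by
  refine Measure.ext_of_lintegral _ fun f _ => ?_
  rw [lintegral_pgfMeasure, tsum_eq_single 0, lintegral_dirac]
  · simp
  · intro k hk
    simp [coeff_one, hk]

lemma pgfMeasure_mul : pgfMeasure (F * G) = pgfMeasure F ∗ pgfMeasure G := by
  refine Measure.ext_of_lintegral _ fun f hf => ?_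
  rw [Measure.lintegral_conv hf]
  simp_rw [lintegral_pgfMeasure, ← ENNReal.tsum_mul_left]
  rw [← ENNReal.tsum_prod, ← Finset.HasAntidiagonal.sigmaAntidiagonalEquivProd.tsum_eq,
    ENNReal.tsum_sigma']
  refine tsum_congr fun n => ?_
  rw [tsum_fintype, coeff_mul, ENNReal.ofNNReal_finsetSum, Finset.sum_mul,
    ← Finset.sum_coe_sort (Finset.HasAntidiagonal.antidiagonal n)]
  refine Finset.sum_congr rfl fun ⟨⟨i, j⟩, hij⟩ _ => ?_
  obtain rfl : i + j = n := by simpa using hij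
  simp [Finset.HasAntidiagonal.sigmaAntidiagonalEquivProd, mul_assoc]

lemma nfoldConv_pgfMeasure (n : ℕ) : nfoldConv n (pgfMeasure F) = pgfMeasure (F ^ n) := by
  induction n with
  | zero => rw [nfoldConv_zero, pow_zero, pgfMeasure_one]
  | succ n ih => rw [nfoldConv_succ, ih, ← pgfMeasure_mul, pow_succ']

variable {F}

lemma isProbabilityMeasure_pgfMeasure (h : HasSum (fun k => coeff k F) 1) :
    IsProbabilityMeasure (pgfMeasure F) := by
  refine ⟨?_⟩
  rw [← lintegral_one, lintegral_pgfMeasure]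
  simpa using (ENNReal.hasSum_coe.mpr h).tsum_eq

lemma isProbabilityMeasure_of_pgfMeasure_pow {n : ℕ} (hn : n ≠ 0)
    [h : IsProbabilityMeasure (pgfMeasure (F ^ n))] : IsProbabilityMeasure (pgfMeasure F) := by
  refine ⟨(ENNReal.pow_right_strictMono hn).injective ?_⟩
  rw [one_pow, ← nfoldConv_univ, nfoldConv_pgfMeasure, measure_univ]

lemma exists_eq_pgfMeasure {μ : Measure ℝ} [IsFiniteMeasure μ]
    (h : μ (range ((↑) : ℕ → ℝ))ᶜ = 0) : ∃ Q : ℝ≥0⟦X⟧, μ = pgfMeasure Q := by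
  refine ⟨PowerSeries.mk fun k => (μ {(k : ℝ)}).toNNReal, ?_⟩
  calc μ = μ.restrict (⋃ k : ℕ, {(k : ℝ)}) := by
        rw [iUnion_singleton_eq_range]
        exact (Measure.restrict_eq_self_of_ae_mem (mem_ae_iff.mpr h)).symm
    _ = Measure.sum fun k : ℕ => μ.restrict {(k : ℝ)} :=
        Measure.restrict_iUnion (fun i j hij => by simpa using hij)
          fun _ => measurableSet_singleton _
    _ = _ := by
        simp_rw [pgfMeasure, Measure.restrict_singleton, coeff_mk,
          ENNReal.coe_toNNReal (measure_ne_top μ _)]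

variable {P : ℝ≥0⟦X⟧} {n : ℕ}

lemma exists_eq_pgfMeasure_of_nfoldConv {ρ : Measure ℝ} [IsFiniteMeasure ρ] (hn : n ≠ 0)
    (hP : constantCoeff P ≠ 0) (h : nfoldConv n ρ = pgfMeasure P) :
    ∃ Q : ℝ≥0⟦X⟧, ρ = pgfMeasure Q := by
  have h_neg : ρ (Iio 0) = 0 := measure_Iio_zero_of_nfoldConv hn <| by
    rw [h]
    exact pgfMeasure_eq_zero_of_forall_natCast_notMem P measurableSet_Iio (by simp)
  have h_zero : ρ {0} ≠ 0 := by
    intro h_zero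
    have h_Iic : pgfMeasure P (Iic 0) = 0 := by
      rw [← h]
      refine nfoldConv_Iic_zero hn ?_
      rw [← Iio_union_right]
      exact measure_union_null h_neg h_zero
    have h_mass : pgfMeasure P {((0 : ℕ) : ℝ)} = 0 := measure_mono_null (by simp) h_Iic
    rw [pgfMeasure_singleton, coeff_zero_eq_constantCoeff_apply] at h_mass
    exact hP (by exact_mod_cast h_mass)
  refine exists_eq_pgfMeasure (measure_eq_zero_of_nfoldConv hn h_zero ?_)
  rw [h]
  exact pgfMeasure_eq_zero_of_forall_natCast_notMem P (countable_range _).measurableSet.compl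
    fun k hk => hk ⟨k, rfl⟩

theorem infinitelyDivisible_pgfMeasure_iff_exists_pow_eq [IsProbabilityMeasure (pgfMeasure P)]
    (hP : constantCoeff P ≠ 0) :
    InfinitelyDivisible (pgfMeasure P) ↔ ∀ n ≠ 0, ∃ Q : ℝ≥0⟦X⟧, Q ^ n = P := by
  constructor
  · intro h n hn
    obtain ⟨ρ, _, hρ⟩ := h n (Nat.pos_of_ne_zero hn)
    obtain ⟨Q, rfl⟩ := exists_eq_pgfMeasure_of_nfoldConv hn hP hρ
    exact ⟨Q, pgfMeasure_injective (by rw [← nfoldConv_pgfMeasure, hρ])⟩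
  · intro h n hn
    obtain ⟨Q, rfl⟩ := h n hn.ne'
    exact ⟨pgfMeasure Q, isProbabilityMeasure_of_pgfMeasure_pow hn.ne', nfoldConv_pgfMeasure Q n⟩

end PgfMeasure

section LogarithmicDerivative

lemma derivative_map {A B : Type*} [CommSemiring A] [CommSemiring B]
    (f : A →+* B) (F : A⟦X⟧) : d⁄dX B (F.map f) = (d⁄dX A F).map f := by
  ext k
  simp only [coeff_derivative, coeff_map, map_mul, map_add, map_natCast, map_one]

lemma derivative_eq_mul_iff {A : Type*} [CommSemiring A] {F R : A⟦X⟧} :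
    d⁄dX A F = R * F ↔ ∀ k : ℕ,
      coeff (k + 1) F * (k + 1) = ∑ j ∈ Finset.range (k + 1), coeff j R * coeff (k - j) F := by
  simp only [PowerSeries.ext_iff, coeff_derivative, coeff_mul,
    Finset.Nat.sum_antidiagonal_eq_sum_range_succ_mk]

lemma natCast_mul_derivative_eq_mul_of_pow {A : Type*} [CommRing A] [IsDomain A] {Q R : A⟦X⟧}
    {n : ℕ} (hn : n ≠ 0) (hQ : Q ≠ 0) (h : d⁄dX A (Q ^ n) = R * Q ^ n) :
    n * d⁄dX A Q = R * Q := by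
  refine mul_left_cancel₀ (pow_ne_zero (n - 1) hQ) ?_
  calc Q ^ (n - 1) * (n * d⁄dX A Q) = d⁄dX A (Q ^ n) := by rw [derivative_pow]; ring
    _ = R * (Q ^ (n - 1) * Q) := by rw [h, pow_sub_one_mul hn]
    _ = Q ^ (n - 1) * (R * Q) := by ring

variable {K : Type*} [Semifield K] [CharZero K]

lemma eq_of_derivative_eq_mul {F G R : K⟦X⟧} (h0 : constantCoeff F = constantCoeff G)
    (hF : d⁄dX K F = R * F) (hG : d⁄dX K G = R * G) : F = G := by
  rw [derivative_eq_mul_iff] at hF hG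
  ext k
  induction k using Nat.strong_induction_on with
  | _ k ih =>
    rcases k with _ | k
    · simpa using h0
    · refine mul_right_cancel₀ k.cast_add_one_ne_zero ?_
      rw [hF, hG]
      exact Finset.sum_congr rfl fun j _ => by rw [ih (k - j) (by lia)]

/-- The coefficients, computed recursively, of the power series with constant coefficient `c` and
logarithmic derivative `R`. -/
noncomputable def coeffOfLogDeriv (R : K⟦X⟧) (c : K) : ℕ → K
  | 0 => c
  | k + 1 => (∑ j : Fin (k + 1), coeff j R * coeffOfLogDeriv R c (k - j)) / (k + 1)

lemma exists_derivative_eq_mul (R : K⟦X⟧) (c : K) :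
    ∃ F : K⟦X⟧, constantCoeff F = c ∧ d⁄dX K F = R * F := by
  refine ⟨PowerSeries.mk (coeffOfLogDeriv R c), ?_, derivative_eq_mul_iff.mpr fun k => ?_⟩
  · rw [← coeff_zero_eq_constantCoeff_apply, coeff_mk, coeffOfLogDeriv]
  · simp only [coeff_mk]
    rw [coeffOfLogDeriv, div_mul_cancel₀ _ k.cast_add_one_ne_zero,
      Fin.sum_univ_eq_sum_range fun j => coeff j R * coeffOfLogDeriv R c (k - j)]

lemma exists_pow_eq_of_derivative_eq_mul {P R : K⟦X⟧} {c : K} {n : ℕ} (hn : n ≠ 0)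
    (hc : c ^ n = constantCoeff P) (hP : d⁄dX K P = R * P) : ∃ Q : K⟦X⟧, Q ^ n = P := by
  obtain ⟨Q, rfl, hQ⟩ := exists_derivative_eq_mul (C (n : K)⁻¹ * R) c
  refine ⟨Q, eq_of_derivative_eq_mul (by rw [map_pow, hc]) ?_ hP⟩
  have h_inv : (n : K⟦X⟧) * C (n : K)⁻¹ = 1 := by
    rw [← map_natCast C, ← map_mul, mul_inv_cancel₀ (Nat.cast_ne_zero.mpr hn), map_one]
  calc d⁄dX K (Q ^ n) = (n * C (n : K)⁻¹) * R * (Q ^ (n - 1) * Q) := by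
        rw [derivative_pow, hQ]; ring
    _ = R * Q ^ n := by rw [h_inv, one_mul, pow_sub_one_mul hn]

end LogarithmicDerivative

section InfiniteDivisibility

open scoped PowerSeries.WithPiTopology

variable {P : ℝ≥0⟦X⟧}

lemma coeff_add_coeff_le_one [IsProbabilityMeasure (pgfMeasure P)] {i j : ℕ} (hij : i ≠ j) :
    coeff i P + coeff j P ≤ 1 := by
  have h_disj : Disjoint ({(i : ℝ)} : Set ℝ) {(j : ℝ)} := by simpa using hij
  have h_le : pgfMeasure P ({(i : ℝ)} ∪ {(j : ℝ)}) ≤ 1 := prob_le_one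
  rw [measure_union h_disj (measurableSet_singleton _), pgfMeasure_singleton,
    pgfMeasure_singleton] at h_le
  exact_mod_cast h_le

lemma tendsto_one_of_pow_succ_eq {Q : ℕ → ℝ≥0⟦X⟧} [∀ m, IsProbabilityMeasure (pgfMeasure (Q m))]
    (hP : constantCoeff P ≠ 0) (hQ : ∀ m, Q m ^ (m + 1) = P) : Tendsto Q atTop (𝓝 1) := by
  have h_const : Tendsto (fun m => constantCoeff (Q m)) atTop (𝓝 1) := by
    have h_root : ∀ m, constantCoeff P ^ ((m + 1 : ℕ) : ℝ)⁻¹ = constantCoeff (Q m) := fun m => by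
      rw [← hQ m, map_pow, NNReal.pow_rpow_inv_natCast _ m.succ_ne_zero]
    have h_exp : Tendsto (fun m : ℕ => ((m + 1 : ℕ) : ℝ)⁻¹) atTop (𝓝 0) :=
      tendsto_inv_atTop_nhds_zero_nat.comp (tendsto_add_atTop_nat 1)
    simpa only [h_root, NNReal.rpow_zero] using
      (tendsto_const_nhds (x := constantCoeff P)).nnrpow h_exp (Or.inl hP)
  refine (WithPiTopology.tendsto_iff_coeff_tendsto _ _ _ _).mpr fun k => ?_
  rcases eq_or_ne k 0 with rfl | hk
  · simpa using h_const
  · have h_gap : Tendsto (fun m => 1 - constantCoeff (Q m)) atTop (𝓝 0) := by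
      simpa using (tendsto_const_nhds (x := (1 : ℝ≥0))).sub h_const
    rw [coeff_one, if_neg hk]
    refine tendsto_of_tendsto_of_tendsto_of_le_of_le tendsto_const_nhds h_gap
      (fun _ => zero_le) fun m => le_tsub_of_add_le_left ?_
    simpa using coeff_add_coeff_le_one (P := Q m) hk.symm

lemma exists_map_toRealHom_eq {R : ℝ⟦X⟧} (hR : ∀ k, 0 ≤ coeff k R) :
    ∃ S : ℝ≥0⟦X⟧, S.map NNReal.toRealHom = R :=
  ⟨PowerSeries.mk fun k => (coeff k R).toNNReal, by
    ext k
    rw [coeff_map, coeff_mk]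
    exact Real.coe_toNNReal _ (hR k)⟩

lemma map_toRealHom_injective : Function.Injective (PowerSeries.map NNReal.toRealHom) :=
  PowerSeries.map_injective _ NNReal.coe_injective

lemma coeff_nonneg_of_forall_exists_pow [IsProbabilityMeasure (pgfMeasure P)]
    (hP : constantCoeff P ≠ 0) (h : ∀ n ≠ 0, ∃ Q : ℝ≥0⟦X⟧, Q ^ n = P) {R : ℝ⟦X⟧}
    (hR : d⁄dX ℝ (P.map NNReal.toRealHom) = R * P.map NNReal.toRealHom) (k : ℕ) :
    0 ≤ coeff k R := by
  choose Q hQ using fun m : ℕ => h (m + 1) m.succ_ne_zero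
  have h_prob : ∀ m, IsProbabilityMeasure (pgfMeasure (Q m)) := fun m =>
    isProbabilityMeasure_of_pgfMeasure_pow m.succ_ne_zero (h := by rwa [hQ])
  have h_tendsto : Tendsto (fun m => R * (Q m).map NNReal.toRealHom) atTop (𝓝 R) := by
    have h_map : Tendsto (fun m => (Q m).map NNReal.toRealHom) atTop (𝓝 1) := by
      have h_one := tendsto_one_of_pow_succ_eq hP hQ
      rw [WithPiTopology.tendsto_iff_coeff_tendsto] at h_one
      rw [← map_one (PowerSeries.map NNReal.toRealHom),
        WithPiTopology.tendsto_iff_coeff_tendsto]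
      simp only [coeff_map]
      exact fun k => (NNReal.continuous_coe.tendsto _).comp (h_one k)
    simpa using tendsto_const_nhds.mul h_map
  have h_coeff : ∀ m, 0 ≤ coeff k (R * (Q m).map NNReal.toRealHom) := fun m => by
    have h_ne : (Q m).map NNReal.toRealHom ≠ 0 := by
      rw [map_ne_zero_iff _ map_toRealHom_injective]
      intro h_zero
      rw [← hQ m, h_zero, map_pow, map_zero] at hP
      exact hP (zero_pow m.succ_ne_zero)
    rw [← natCast_mul_derivative_eq_mul_of_pow m.succ_ne_zero h_ne
      (by rw [← map_pow, hQ, hR]), derivative_map, ← map_natCast C, coeff_C_mul,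
      coeff_map]
    exact mul_nonneg (Nat.cast_nonneg _) (NNReal.coe_nonneg _)
  exact ge_of_tendsto' ((WithPiTopology.tendsto_iff_coeff_tendsto _ _ _ _).mp h_tendsto k) h_coeff

/-- The criterion of Katti and Steutel–van Harn. -/
theorem infinitelyDivisible_pgfMeasure_iff_exists_derivative_eq_mul
    [IsProbabilityMeasure (pgfMeasure P)] (hP : constantCoeff P ≠ 0) :
    InfinitelyDivisible (pgfMeasure P) ↔ ∃ R : ℝ≥0⟦X⟧, d⁄dX ℝ≥0 P = R * P := by
  rw [infinitelyDivisible_pgfMeasure_iff_exists_pow_eq hP]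
  constructor
  · intro h
    have h_const : constantCoeff (P.map NNReal.toRealHom) ≠ 0 := by
      rw [← coeff_zero_eq_constantCoeff_apply, coeff_map, coeff_zero_eq_constantCoeff_apply]
      exact NNReal.coe_ne_zero.mpr hP
    have hR : d⁄dX ℝ (P.map NNReal.toRealHom) =
        d⁄dX ℝ (P.map NNReal.toRealHom) * (P.map NNReal.toRealHom)⁻¹ *
          P.map NNReal.toRealHom := by
      rw [mul_assoc, PowerSeries.inv_mul_cancel _ h_const, mul_one]
    obtain ⟨S, hS⟩ := exists_map_toRealHom_eq (coeff_nonneg_of_forall_exists_pow hP h hR)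
    refine ⟨S, map_toRealHom_injective ?_⟩
    rw [← derivative_map, hR, map_mul, hS]
  · rintro ⟨R, hR⟩ n hn
    exact exists_pow_eq_of_derivative_eq_mul hn (NNReal.rpow_inv_natCast_pow _ hn) hR

end InfiniteDivisibility

section FallingFactorialExpansion

lemma tendsto_natCast_add_one_atTop : Tendsto (fun k : ℕ => (k : ℝ) + 1) atTop atTop :=
  tendsto_atTop_add_const_right _ _ tendsto_natCast_atTop_atTop

variable {α ν : ℝ}

lemma descFactorial_rpow_le (hν : 0 ≤ ν) (k j : ℕ) :
    (k.descFactorial j : ℝ) ^ ν ≤ ((k : ℝ) + 1) ^ (j * ν) := by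
  have h_pow : (k.descFactorial j : ℝ) ≤ ((k : ℝ) + 1) ^ j := by
    exact_mod_cast (k.descFactorial_le_pow j).trans (Nat.pow_le_pow_left k.le_succ j)
  rw [Real.rpow_mul (by positivity), Real.rpow_natCast]
  exact Real.rpow_le_rpow (by positivity) h_pow hν

lemma rpow_le_descFactorial_rpow (hν : 0 ≤ ν) (t j : ℕ) :
    ((t : ℝ) + 1) ^ (j * ν) ≤ ((t + j).descFactorial j : ℝ) ^ ν := by
  have h_pow : ((t : ℝ) + 1) ^ j ≤ ((t + j).descFactorial j : ℝ) := by
    have := Nat.pow_sub_le_descFactorial (t + j) j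
    rw [show t + j + 1 - j = t + 1 by lia] at this
    exact_mod_cast this
  rw [Real.rpow_mul (by positivity), Real.rpow_natCast]
  exact Real.rpow_le_rpow (by positivity) h_pow hν

lemma eq_zero_of_mul_descFactorial_rpow_le {c : ℝ} {j : ℕ} (hc : 0 ≤ c) (hα : 0 ≤ α)
    (hν : 0 ≤ ν) (hj : α < j * ν)
    (h : ∀ k : ℕ, j ≤ k → c * (k.descFactorial j : ℝ) ^ ν ≤ ((k : ℝ) + 1) ^ α) : c = 0 := by
  have h_bdd : ∀ t : ℕ, c * ((t : ℝ) + 1) ^ (j * ν - α) ≤ ((j : ℝ) + 1) ^ α := fun t => by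
    have ht : (0 : ℝ) < t + 1 := by positivity
    rw [Real.rpow_sub ht, ← mul_div_assoc, div_le_iff₀ (by positivity)]
    calc c * ((t : ℝ) + 1) ^ (j * ν) ≤ c * ((t + j).descFactorial j : ℝ) ^ ν := by
          gcongr
          exact rpow_le_descFactorial_rpow hν t j
      _ ≤ (((t + j : ℕ) : ℝ) + 1) ^ α := h _ (Nat.le_add_left j t)
      _ ≤ (((j : ℝ) + 1) * (t + 1)) ^ α := by
          refine Real.rpow_le_rpow (by positivity) ?_ hα
          push_cast
          nlinarith [mul_nonneg (Nat.cast_nonneg (α := ℝ) j) (Nat.cast_nonneg (α := ℝ) t)]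
      _ = ((j : ℝ) + 1) ^ α * ((t : ℝ) + 1) ^ α := Real.mul_rpow (by positivity) ht.le
  by_contra h_ne
  have h_top : Tendsto (fun t : ℕ => c * ((t : ℝ) + 1) ^ (j * ν - α)) atTop atTop :=
    ((tendsto_rpow_atTop (sub_pos.mpr hj)).comp tendsto_natCast_add_one_atTop).const_mul_atTop
      (hc.lt_of_ne' h_ne)
  obtain ⟨t, ht⟩ := (h_top.eventually_gt_atTop (((j : ℝ) + 1) ^ α)).exists
  exact (h_bdd t).not_gt ht

lemma tendsto_mul_rpow_sub {c β : ℝ} (hc : α < β → c = 0) :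
    Tendsto (fun x : ℝ => c * x ^ (β - α)) atTop (𝓝 (if β = α then c else 0)) := by
  rcases lt_trichotomy β α with hβ | rfl | hβ
  · simpa [hβ.ne] using (tendsto_rpow_neg_atTop (sub_pos.mpr hβ)).const_mul c
  · simp
  · simp [hc hβ]

lemma exists_one_le_of_rpow_le_sum {ι κ : Type*} {S : Finset ι} {c β : ι → ℝ} {l : Filter κ}
    [NeBot l] {u : κ → ℝ} (hu : Tendsto u l atTop) (hβ : Function.Injective β)
    (hc : ∀ j ∈ S, α < β j → c j = 0) (h : ∀ᶠ k in l, u k ^ α ≤ ∑ j ∈ S, c j * u k ^ β j) :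
    ∃ J ∈ S, β J = α ∧ 1 ≤ c J := by
  have h_lim : Tendsto (fun k => ∑ j ∈ S, c j * u k ^ (β j - α)) l
      (𝓝 (∑ j ∈ S, if β j = α then c j else 0)) :=
    tendsto_finsetSum _ fun j hj => (tendsto_mul_rpow_sub (hc j hj)).comp hu
  have h_one_le : 1 ≤ ∑ j ∈ S, if β j = α then c j else 0 := by
    refine ge_of_tendsto h_lim ?_
    filter_upwards [h, hu.eventually_gt_atTop 0] with k hk h_pos
    simp_rw [Real.rpow_sub h_pos, ← mul_div_assoc]
    rwa [← Finset.sum_div, one_le_div₀ (Real.rpow_pos_of_pos h_pos α)]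
  obtain ⟨J, hJ, h_ne⟩ := Finset.exists_ne_zero_of_sum_ne_zero (zero_lt_one.trans_le h_one_le).ne'
  have hβJ : β J = α := by
    by_contra h_exp
    exact h_ne (if_neg h_exp)
  refine ⟨J, hJ, hβJ, ?_⟩
  rwa [Finset.sum_eq_single_of_mem J hJ
    fun j _ hj => if_neg fun h_exp => hj (hβ (h_exp.trans hβJ.symm)), if_pos hβJ] at h_one_le

lemma tendsto_add_rpow_sub_rpow {y : ℝ} (hα0 : 0 ≤ α) (hα1 : α < 1) (hy : 0 ≤ y) :
    Tendsto (fun x : ℝ => (x + y) ^ α - x ^ α) atTop (𝓝 0) := by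
  have h_upper : ∀ x : ℝ, 0 < x → (x + y) ^ α - x ^ α ≤ α * y * x ^ (α - 1) := fun x hx => by
    have h_bernoulli : (1 + y / x) ^ α ≤ 1 + α * (y / x) :=
      rpow_one_add_le_one_add_mul_self (by linarith [div_nonneg hy hx.le]) hα0 hα1.le
    calc (x + y) ^ α - x ^ α = x ^ α * (1 + y / x) ^ α - x ^ α := by
          rw [← Real.mul_rpow hx.le (by positivity), mul_one_add, mul_div_cancel₀ _ hx.ne']
      _ ≤ x ^ α * (1 + α * (y / x)) - x ^ α := by gcongr
      _ = α * y * x ^ (α - 1) := by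
          rw [Real.rpow_sub_one hx.ne']
          ring
  have h_lim : Tendsto (fun x : ℝ => α * y * x ^ (α - 1)) atTop (𝓝 0) := by
    simpa using (tendsto_rpow_neg_atTop (sub_pos.mpr hα1)).const_mul (α * y)
  refine tendsto_of_tendsto_of_tendsto_of_le_of_le' tendsto_const_nhds h_lim ?_ ?_
  · filter_upwards [eventually_gt_atTop 0] with x hx
    exact sub_nonneg.mpr (Real.rpow_le_rpow hx.le (by linarith) hα0)
  · filter_upwards [eventually_gt_atTop 0] using h_upper

variable {s : ℕ → ℝ}

lemma exists_mul_eq_and_one_le_of_sum_eq (hν : 0 < ν) (hα : 0 ≤ α) (hs : ∀ j, 0 ≤ s j)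
    (h : ∀ k : ℕ, ∑ j ∈ Finset.range (k + 1), s j * (k.descFactorial j : ℝ) ^ ν =
      ((k : ℝ) + 1) ^ α) : ∃ J : ℕ, J * ν = α ∧ 1 ≤ s J := by
  have h_zero : ∀ j : ℕ, α < j * ν → s j = 0 := fun j hj =>
    eq_zero_of_mul_descFactorial_rpow_le (hs j) hα hν.le hj fun k hk => by
      rw [← h k]
      exact Finset.single_le_sum (f := fun j => s j * (k.descFactorial j : ℝ) ^ ν)
        (fun i _ => mul_nonneg (hs i) (by positivity)) (Finset.mem_range_succ_iff.mpr hk)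
  obtain ⟨N, hN⟩ := exists_nat_gt (α / ν)
  rw [div_lt_iff₀ hν] at hN
  have h_tail : ∀ j, N ≤ j → s j = 0 := fun j hj =>
    h_zero j (hN.trans_le (by gcongr))
  have h_le : ∀ᶠ k : ℕ in atTop,
      ((k : ℝ) + 1) ^ α ≤ ∑ j ∈ Finset.range N, s j * ((k : ℝ) + 1) ^ (j * ν) := by
    filter_upwards [eventually_ge_atTop N] with k hk
    calc ((k : ℝ) + 1) ^ α = ∑ j ∈ Finset.range N, s j * (k.descFactorial j : ℝ) ^ ν := by
          rw [← h k]
          refine (Finset.sum_subset (Finset.range_mono (by lia)) fun j _ hj => ?_).symm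
          rw [h_tail j (by simpa using hj), zero_mul]
      _ ≤ ∑ j ∈ Finset.range N, s j * ((k : ℝ) + 1) ^ (j * ν) := by
          gcongr with j
          · exact hs j
          · exact descFactorial_rpow_le hν.le k j
  obtain ⟨J, -, hJ⟩ := exists_one_le_of_rpow_le_sum tendsto_natCast_add_one_atTop
    ((mul_left_injective₀ hν.ne').comp Nat.cast_injective) (fun j _ => h_zero j) h_le
  exact ⟨J, hJ⟩

lemma not_forall_sum_mul_descFactorial_rpow_eq (hν : 0 < ν) (hα0 : α ≠ 0) (hα1 : α < 1)
    (hs : ∀ j, 0 ≤ s j) :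
    ¬ ∀ k : ℕ, ∑ j ∈ Finset.range (k + 1), s j * (k.descFactorial j : ℝ) ^ ν =
      ((k : ℝ) + 1) ^ α := by
  intro h
  have h_s0 : s 0 = 1 := by simpa using h 0
  have hα : 0 ≤ α := by
    by_contra! h_neg
    have h_s1 : 1 + s 1 = 2 ^ α := by
      simpa [Finset.sum_range_succ, h_s0, show (1 : ℝ) + 1 = 2 by norm_num] using h 1
    linarith [hs 1, Real.rpow_lt_one_of_one_lt_of_neg one_lt_two h_neg]
  obtain ⟨J, rfl, h_sJ⟩ := exists_mul_eq_and_one_le_of_sum_eq hν hα hs h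
  have hJ : J ≠ 0 := by
    rintro rfl
    simp at hα0
  -- The terms `j = 0` and `j = J` alone exceed the sum, as `α < 1` makes `x ^ α` grow too slowly.
  have h_gap : ∀ t : ℕ, 1 ≤ ((t : ℝ) + 1 + J) ^ (J * ν) - ((t : ℝ) + 1) ^ (J * ν) := fun t => by
    rw [le_sub_iff_add_le]
    calc 1 + ((t : ℝ) + 1) ^ (J * ν) ≤ s 0 * ((t + J).descFactorial 0 : ℝ) ^ ν +
          s J * ((t + J).descFactorial J : ℝ) ^ ν := by
          rw [h_s0, Nat.descFactorial_zero, Nat.cast_one, Real.one_rpow, mul_one]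
          gcongr
          exact (rpow_le_descFactorial_rpow hν.le t J).trans
            (le_mul_of_one_le_left (by positivity) h_sJ)
      _ ≤ (((t + J : ℕ) : ℝ) + 1) ^ (J * ν) := by
          rw [← h (t + J)]
          exact Finset.add_le_sum (f := fun j => s j * ((t + J).descFactorial j : ℝ) ^ ν)
            (fun i _ => mul_nonneg (hs i) (by positivity)) (by simp) (by simp) hJ.symm
      _ = ((t : ℝ) + 1 + J) ^ (J * ν) := by
          push_cast
          ring_nf
  exact zero_lt_one.not_ge <| ge_of_tendsto' ((tendsto_add_rpow_sub_rpow hα hα1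
    J.cast_nonneg).comp tendsto_natCast_add_one_atTop) h_gap

end FallingFactorialExpansion

section ConwayMaxwellPoisson

/-- The unnormalised probability mass function `λ ^ k / (k !) ^ ν` of `CMP(λ, ν)`. -/
noncomputable def cmpWeight (lam : ℝ≥0) (nu : ℝ) (k : ℕ) : ℝ≥0 :=
  lam ^ k / (k.factorial : ℝ≥0) ^ nu

/-- The probability generating function of `CMP(λ, ν)`, as a formal power series. -/
noncomputable def cmpPGF (lam : ℝ≥0) (nu : ℝ) : ℝ≥0⟦X⟧ :=
  PowerSeries.mk fun k => cmpWeight lam nu k / ∑' j, cmpWeight lam nu j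

variable {lam : ℝ≥0} {nu : ℝ}

lemma cmpMeasure_eq_pgfMeasure (lam : ℝ≥0) (nu : ℝ) :
    cmpMeasure lam nu = pgfMeasure (cmpPGF lam nu) := by
  have h_weight (k : ℕ) : (lam : ℝ) ^ k / (k.factorial : ℝ) ^ nu = cmpWeight lam nu k := by
    rw [cmpWeight]
    push_cast
    rfl
  simp only [cmpMeasure, pgfMeasure, cmpPGF, coeff_mk, h_weight, ← NNReal.coe_tsum,
    ← NNReal.coe_div, ENNReal.ofReal_coe_nnreal]

lemma cmpWeight_ne_zero (hlam : lam ≠ 0) (k : ℕ) : cmpWeight lam nu k ≠ 0 := by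
  rw [cmpWeight]
  positivity

lemma cmpWeight_succ (lam : ℝ≥0) (nu : ℝ) (k : ℕ) :
    cmpWeight lam nu (k + 1) = lam * ((k : ℝ≥0) + 1) ^ (-nu) * cmpWeight lam nu k := by
  rw [cmpWeight, cmpWeight, Nat.factorial_succ, Nat.cast_mul, NNReal.mul_rpow, NNReal.rpow_neg,
    Nat.cast_succ, pow_succ']
  field_simp

lemma pow_mul_cmpWeight_sub {j k : ℕ} (hjk : j ≤ k) :
    lam ^ j * cmpWeight lam nu (k - j) = cmpWeight lam nu k * (k.descFactorial j : ℝ≥0) ^ nu := by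
  have h_ne : (k.descFactorial j : ℝ≥0) ^ nu ≠ 0 := by
    have : k.descFactorial j ≠ 0 := mt Nat.descFactorial_eq_zero_iff_lt.mp hjk.not_gt
    positivity
  rw [cmpWeight, cmpWeight, ← Nat.factorial_mul_descFactorial hjk, Nat.cast_mul, NNReal.mul_rpow,
    ← mul_div_assoc, ← pow_add, Nat.add_sub_cancel' hjk, div_mul_eq_mul_div,
    mul_div_mul_right _ _ h_ne]

lemma summable_cmpWeight_of_pos (hlam : lam ≠ 0) (hnu : 0 < nu) :
    Summable (cmpWeight lam nu) := by
  rw [← NNReal.summable_coe]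
  have h_ratio : Tendsto (fun k : ℕ => (lam : ℝ) * ((k : ℝ) + 1) ^ (-nu)) atTop (𝓝 0) := by
    simpa using ((tendsto_rpow_neg_atTop hnu).comp tendsto_natCast_add_one_atTop).const_mul
      (lam : ℝ)
  refine summable_of_ratio_test_tendsto_lt_one zero_lt_one
    (.of_forall fun k => NNReal.coe_ne_zero.mpr (cmpWeight_ne_zero hlam k))
    (h_ratio.congr fun k => ?_)
  rw [NNReal.norm_eq, NNReal.norm_eq, cmpWeight_succ]
  push_cast
  rw [mul_div_cancel_right₀ _ (NNReal.coe_ne_zero.mpr (cmpWeight_ne_zero hlam k))]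

lemma summable_cmpWeight_zero (hlam : lam < 1) : Summable (cmpWeight lam 0) := by
  have h_geometric : cmpWeight lam 0 = fun k => lam ^ k := funext fun k => by simp [cmpWeight]
  rw [h_geometric]
  exact NNReal.summable_geometric hlam

lemma tsum_cmpWeight_ne_zero (hlam : lam ≠ 0) (h : Summable (cmpWeight lam nu)) :
    ∑' k, cmpWeight lam nu k ≠ 0 :=
  (NNReal.tsum_pos h 0 (pos_of_ne_zero (cmpWeight_ne_zero hlam 0))).ne'

lemma hasSum_coeff_cmpPGF (hlam : lam ≠ 0) (h : Summable (cmpWeight lam nu)) :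
    HasSum (fun k => coeff k (cmpPGF lam nu)) 1 := by
  simpa only [cmpPGF, coeff_mk, div_self (tsum_cmpWeight_ne_zero hlam h)] using
    h.hasSum.div_const (∑' k, cmpWeight lam nu k)

lemma coeff_cmpPGF_ne_zero (hlam : lam ≠ 0) (h : Summable (cmpWeight lam nu)) (k : ℕ) :
    coeff k (cmpPGF lam nu) ≠ 0 := by
  rw [cmpPGF, coeff_mk]
  exact div_ne_zero (cmpWeight_ne_zero hlam k) (tsum_cmpWeight_ne_zero hlam h)

lemma coeff_succ_cmpPGF_mul (lam : ℝ≥0) (nu : ℝ) (k : ℕ) :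
    coeff (k + 1) (cmpPGF lam nu) * (k + 1) =
      lam * coeff k (cmpPGF lam nu) * ((k : ℝ≥0) + 1) ^ (1 - nu) := by
  rw [cmpPGF, coeff_mk, coeff_mk, cmpWeight_succ, sub_eq_neg_add,
    NNReal.rpow_add k.cast_add_one_ne_zero, NNReal.rpow_one]
  ring

lemma pow_mul_coeff_sub_cmpPGF {j k : ℕ} (hjk : j ≤ k) :
    lam ^ j * coeff (k - j) (cmpPGF lam nu) =
      coeff k (cmpPGF lam nu) * (k.descFactorial j : ℝ≥0) ^ nu := by
  rw [cmpPGF, coeff_mk, coeff_mk, ← mul_div_assoc, pow_mul_cmpWeight_sub hjk,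
    mul_div_right_comm]

lemma derivative_cmpPGF_eq_mul_iff (hlam : lam ≠ 0) (h : Summable (cmpWeight lam nu))
    (s : ℕ → ℝ≥0) :
    d⁄dX ℝ≥0 (cmpPGF lam nu) = PowerSeries.mk (fun j => lam ^ (j + 1) * s j) * cmpPGF lam nu ↔
      ∀ k : ℕ, ∑ j ∈ Finset.range (k + 1), s j * (k.descFactorial j : ℝ≥0) ^ nu =
        ((k : ℝ≥0) + 1) ^ (1 - nu) := by
  rw [derivative_eq_mul_iff]
  refine forall_congr' fun k => ?_
  have h_conv : ∑ j ∈ Finset.range (k + 1), coeff j (PowerSeries.mk fun j => lam ^ (j + 1) * s j) *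
        coeff (k - j) (cmpPGF lam nu) = lam * coeff k (cmpPGF lam nu) *
        ∑ j ∈ Finset.range (k + 1), s j * (k.descFactorial j : ℝ≥0) ^ nu := by
    rw [Finset.mul_sum]
    refine Finset.sum_congr rfl fun j hj => ?_
    rw [coeff_mk]
    linear_combination (lam * s j) * pow_mul_coeff_sub_cmpPGF (nu := nu)
      (Finset.mem_range_succ_iff.mp hj)
  rw [h_conv, coeff_succ_cmpPGF_mul,
    mul_right_inj' (mul_ne_zero hlam (coeff_cmpPGF_ne_zero hlam h k)), eq_comm]

lemma exists_derivative_cmpPGF_eq_mul_iff (hlam : lam ≠ 0) (h : Summable (cmpWeight lam nu)) :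
    (∃ R, d⁄dX ℝ≥0 (cmpPGF lam nu) = R * cmpPGF lam nu) ↔ ∃ s : ℕ → ℝ≥0, ∀ k : ℕ,
      ∑ j ∈ Finset.range (k + 1), s j * (k.descFactorial j : ℝ≥0) ^ nu =
        ((k : ℝ≥0) + 1) ^ (1 - nu) := by
  simp_rw [← derivative_cmpPGF_eq_mul_iff hlam h]
  refine ⟨fun ⟨R, hR⟩ => ⟨fun j => coeff j R / lam ^ (j + 1), ?_⟩, fun ⟨s, hs⟩ => ⟨_, hs⟩⟩
  convert hR
  ext j
  rw [coeff_mk, mul_div_cancel₀ _ (pow_ne_zero _ hlam)]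

lemma exists_sum_mul_descFactorial_rpow_eq_iff (hnu : 0 ≤ nu) :
    (∃ s : ℕ → ℝ≥0, ∀ k : ℕ,
      ∑ j ∈ Finset.range (k + 1), s j * (k.descFactorial j : ℝ≥0) ^ nu =
        ((k : ℝ≥0) + 1) ^ (1 - nu)) ↔ nu = 0 ∨ nu = 1 := by
  constructor
  · rintro ⟨s, hs⟩
    by_contra! h_ne
    refine not_forall_sum_mul_descFactorial_rpow_eq (s := fun j => s j) (hnu.lt_of_ne' h_ne.1)
      (sub_ne_zero.mpr h_ne.2.symm) (sub_lt_self 1 (hnu.lt_of_ne' h_ne.1))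
      (fun j => (s j).coe_nonneg) fun k => ?_
    have h_coe := congrArg ((↑) : ℝ≥0 → ℝ) (hs k)
    push_cast at h_coe
    exact h_coe
  · rintro (rfl | rfl)
    · exact ⟨fun _ => 1, fun k => by simp⟩
    · exact ⟨fun j => if j = 0 then 1 else 0, fun k => by simp⟩

end ConwayMaxwellPoisson

/-- The Conway–Maxwell–Poisson distribution `CMP(λ, ν)` (with `λ > 0, ν > 0` or
`ν = 0, 0 < λ < 1`) is infinitely divisible if and only if `ν = 0` or `ν = 1`. -/
theorem cmp_infinitelyDivisible_iff (lam nu : ℝ)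
    (h : (0 < lam ∧ 0 < nu) ∨ (nu = 0 ∧ 0 < lam ∧ lam < 1)) :
    InfinitelyDivisible (cmpMeasure lam nu) ↔ nu = 0 ∨ nu = 1 := by
  have hnu : 0 ≤ nu := by rcases h with h | h <;> linarith
  have hlam : 0 < lam := by tauto
  lift lam to ℝ≥0 using hlam.le
  have hlam_ne : lam ≠ 0 := (NNReal.coe_pos.mp hlam).ne'
  have h_summable : Summable (cmpWeight lam nu) := by
    rcases h with ⟨-, hnu_pos⟩ | ⟨rfl, -, hlam_lt⟩
    · exact summable_cmpWeight_of_pos hlam_ne hnu_pos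
    · exact summable_cmpWeight_zero hlam_lt
  have : IsProbabilityMeasure (pgfMeasure (cmpPGF lam nu)) :=
    isProbabilityMeasure_pgfMeasure (hasSum_coeff_cmpPGF hlam_ne h_summable)
  have h_const : constantCoeff (cmpPGF lam nu) ≠ 0 := by
    rw [← coeff_zero_eq_constantCoeff_apply]
    exact coeff_cmpPGF_ne_zero hlam_ne h_summable 0
  rw [cmpMeasure_eq_pgfMeasure,
    infinitelyDivisible_pgfMeasure_iff_exists_derivative_eq_mul h_const,
    exists_derivative_cmpPGF_eq_mul_iff hlam_ne h_summable,
    exists_sum_mul_descFactorial_rpow_eq_iff hnu]
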